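/- A positive Gorenstein ideal in R[x_1,x_2,x_3] with socle ℓ of degree 4d does not contain a strictly positive form of degree 2d+2; i.e., if ℓ is a nonzero linear functional on R[x]_{3,4d} that is nonnegative on squares of degree-2d forms, and p in R[x]_{3,2d+2} satisfies p(x) > 0 for all nonzero x in R^3, then ℓ(pq) ≠ 0 for some q in R[x]_{3,2d-2}. -/

import Mathlib

open MvPolynomial

/-!
Suppose `p` is annihilated by a positive functional, and take one, `l`, on an extreme ray of the
cone of positive functionals vanishing on the multiples of `p`. If all forms in the kernel of the
catalecticant of `l` shared a prime factor with `p`, then this factor would vanish at a complex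
point, and extremality would force evaluation at that point to be a complex multiple of `l`; such
a point is a multiple of a real one, where `p` does not vanish. Hence some `g` of degree `2d` in
the kernel is coprime to `p`.

Setting a general linear form equal to `1` turns `l` into a functional whose Gorenstein quotient
`B` is finite-dimensional. Counting dimensions on the line where that form vanishes, which `p` and
`g` meet without a common point, gives `dim B < 2 dim V` for the image `V` of the forms of degree
`2d`, and `l` is nonnegative on squares from `V`. But `B` has no real points, so it contains a
square root of `-1`; multiplication by it is an anti-isometry of the nondegenerate form
`(a, b) ↦ l (a b)`, whose nonnegative subspaces therefore have dimension at most `dim B / 2`.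
-/

section BilinForm

open Module

variable {V : Type*} [AddCommGroup V] [Module ℝ V]

theorem mem_ker_of_apply_self_eq_zero {A : LinearMap.BilinForm ℝ V} (hA : A.IsPosSemidef) {x : V}
    (hx : A x x = 0) : x ∈ LinearMap.ker A := by
  refine LinearMap.mem_ker.2 (LinearMap.ext fun y ↦ ?_)
  have cauchy_schwarz := A.apply_mul_apply_le_of_forall_zero_le hA.nonneg x y
  rw [hx, zero_mul, hA.eq y x] at cauchy_schwarz
  exact mul_self_eq_zero.1 (le_antisymm cauchy_schwarz (mul_self_nonneg _))

theorem exists_apply_self_mul_apply_self_le [FiniteDimensional ℝ V] [Nontrivial V]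
    (A B : LinearMap.BilinForm ℝ V) (hA : ∀ x, x ≠ 0 → 0 < A x x) :
    ∃ x₀, x₀ ≠ 0 ∧ ∀ x, B x x * A x₀ x₀ ≤ B x₀ x₀ * A x x := by
  let e : V ≃ₗ[ℝ] EuclideanSpace ℝ (Fin (finrank ℝ V)) :=
    LinearEquiv.ofFinrankEq _ _ (by simp)
  have : Nontrivial (EuclideanSpace ℝ (Fin (finrank ℝ V))) := e.symm.toEquiv.nontrivial
  have continuous_apply_self (C : LinearMap.BilinForm ℝ V) :
      Continuous fun v ↦ C (e.symm v) (e.symm v) := by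
    let C' := (C.compl₁₂ e.symm.toLinearMap e.symm.toLinearMap).toContinuousBilinearMap
    exact (C'.continuous.clm_apply continuous_id : Continuous fun v ↦ C' v v)
  have pos {v : EuclideanSpace ℝ (Fin (finrank ℝ V))} (hv : v ≠ 0) :
      0 < A (e.symm v) (e.symm v) := hA _ (e.symm.map_ne_zero_iff.2 hv)
  have ne_zero_of_mem_sphere {v : EuclideanSpace ℝ (Fin (finrank ℝ V))}
      (hv : v ∈ Metric.sphere 0 1) : v ≠ 0 := Metric.ne_of_mem_sphere hv one_ne_zero
  obtain ⟨v₀, hv₀, hmax⟩ := (isCompact_sphere _ _).exists_isMaxOn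
    (NormedSpace.sphere_nonempty (x := (0 : EuclideanSpace ℝ (Fin (finrank ℝ V)))).2 zero_le_one)
    ((continuous_apply_self B).continuousOn.div (continuous_apply_self A).continuousOn
      fun v hv ↦ (pos (ne_zero_of_mem_sphere hv)).ne')
  refine ⟨e.symm v₀, e.symm.map_ne_zero_iff.2 (ne_zero_of_mem_sphere hv₀), fun x ↦ ?_⟩
  obtain rfl | hx := eq_or_ne x 0
  · simp
  have hex : e x ≠ 0 := e.map_ne_zero_iff.2 hx
  have hnorm : ‖e x‖⁻¹ ≠ 0 := inv_ne_zero (norm_ne_zero_iff.2 hex)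
  have ratio_le := hmax (show ‖e x‖⁻¹ • e x ∈ Metric.sphere 0 1 by
    simp [norm_smul, norm_ne_zero_iff.2 hex])
  simp only [Set.mem_ofPred_eq, map_smul, LinearMap.smul_apply, smul_eq_mul, e.symm_apply_apply,
    Pi.div_apply, mul_div_mul_left _ _ hnorm] at ratio_le
  exact (div_le_div_iff₀ (hA x hx) (pos (ne_zero_of_mem_sphere hv₀))).1 ratio_le

theorem exists_isPosSemidef_smul_sub_ker_lt [FiniteDimensional ℝ V] {A B : LinearMap.BilinForm ℝ V}
    (hA : A.IsPosSemidef) (hB : B.IsSymm) (hA₀ : A ≠ 0)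
    (hker : LinearMap.ker A ≤ LinearMap.ker B) :
    ∃ μ : ℝ, (μ • A - B).IsPosSemidef ∧ LinearMap.ker A < LinearMap.ker (μ • A - B) := by
  obtain ⟨U, hU⟩ := (LinearMap.ker A).exists_isCompl
  have : Nontrivial U := Submodule.nontrivial_iff_ne_bot.2 fun h ↦
    hA₀ (LinearMap.ker_eq_top.1 (by simpa [h] using hU.sup_eq_top))
  obtain ⟨u₀, hu₀, hle⟩ := exists_apply_self_mul_apply_self_le (A.restrict U) (B.restrict U)
    fun u hu ↦ (hA.nonneg u).lt_of_ne' fun h ↦ hu <| Subtype.ext <|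
      Submodule.disjoint_def.1 hU.disjoint _ (mem_ker_of_apply_self_eq_zero hA h) u.2
  simp only [LinearMap.BilinForm.restrict_apply, LinearMap.domRestrict_apply] at hle
  have hAu₀ : A u₀ u₀ ≠ 0 := fun h ↦ hu₀ <| Subtype.ext <|
    Submodule.disjoint_def.1 hU.disjoint _ (mem_ker_of_apply_self_eq_zero hA h) u₀.2
  set μ := B u₀ u₀ / A u₀ u₀
  have hpsd : (μ • A - B).IsPosSemidef := by
    refine ⟨⟨fun x y ↦ by simp [hA.eq x y, hB.eq x y]⟩, ⟨fun x ↦ ?_⟩⟩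
    obtain ⟨w, hw, u, hu, rfl⟩ := Submodule.mem_sup.1 (hU.sup_eq_top ▸ Submodule.mem_top (x := x))
    have hAw := LinearMap.mem_ker.1 hw
    have hBw := LinearMap.mem_ker.1 (hker hw)
    have apply_self : (μ • A - B) (w + u) (w + u) = μ * A u u - B u u := by
      simp [hAw, hBw, hA.eq u w, hB.eq u w]
    rw [apply_self, sub_nonneg, div_mul_eq_mul_div, le_div_iff₀ ((hA.nonneg _).lt_of_ne' hAu₀)]
    exact hle ⟨u, hu⟩
  refine ⟨μ, hpsd, fun w hw ↦ ?_, fun hle' ↦ hAu₀ ?_⟩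
  · simp [LinearMap.mem_ker.1 hw, LinearMap.mem_ker.1 (hker hw)]
  · have hmem : (u₀ : V) ∈ LinearMap.ker (μ • A - B) :=
      mem_ker_of_apply_self_eq_zero hpsd (by simp [μ, div_mul_cancel₀ _ hAu₀])
    rw [LinearMap.mem_ker.1 (hle' hmem), LinearMap.zero_apply]

theorem exists_isPosSemidef_forall_ker_le_eq_smul [FiniteDimensional ℝ V]
    {P : Submodule ℝ (LinearMap.BilinForm ℝ V)} (hP : ∀ B ∈ P, B.IsSymm)
    {A₀ : LinearMap.BilinForm ℝ V} (hA₀P : A₀ ∈ P) (hA₀ : A₀.IsPosSemidef) (hA₀_ne : A₀ ≠ 0) :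
    ∃ A ∈ P, A.IsPosSemidef ∧ A ≠ 0 ∧
      ∀ B ∈ P, LinearMap.ker A ≤ LinearMap.ker B → ∃ c : ℝ, B = c • A := by
  obtain ⟨_, ⟨(A : LinearMap.BilinForm ℝ V), ⟨hAP, hA, hA_ne⟩, rfl⟩, hmax⟩ := wellFounded_gt.has_min
    (LinearMap.ker '' {A : LinearMap.BilinForm ℝ V | A ∈ P ∧ A.IsPosSemidef ∧ A ≠ 0})
    ⟨_, A₀, ⟨hA₀P, hA₀, hA₀_ne⟩, rfl⟩
  refine ⟨A, hAP, hA, hA_ne, fun B hB hker ↦ ?_⟩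
  obtain ⟨μ, hμ, hlt⟩ := exists_isPosSemidef_smul_sub_ker_lt hA (hP B hB) hA_ne hker
  refine ⟨μ, (sub_eq_zero.1 ?_).symm⟩
  by_contra hne
  have mem : μ • A - B ∈ P := P.sub_mem (x := μ • A) (y := B) (P.smul_mem μ hAP) hB
  exact hmax _ ⟨_, ⟨mem, hμ, hne⟩, rfl⟩ hlt

theorem two_mul_finrank_le_of_antiisometry {K E : Type*} [Field K] [LinearOrder K]
    [IsStrictOrderedRing K] [AddCommGroup E] [Module K E] [FiniteDimensional K E]
    {β : LinearMap.BilinForm K E} (hβ : β.Nondegenerate) (hsymm : β.IsSymm) {J : E →ₗ[K] E}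
    (hinj : Function.Injective J) (hJ : ∀ x y, β (J x) (J y) = -β x y) {V : Submodule K E}
    (hV : ∀ x ∈ V, 0 ≤ β x x) : 2 * finrank K V ≤ finrank K E := by
  have hrad {x} (hx : x ∈ V) (hxx : β x x = 0) {y} (hy : y ∈ V) : β x y = 0 := by
    have cauchy_schwarz := (β.restrict V).apply_mul_apply_le_of_forall_zero_le
      (fun z ↦ hV z z.2) ⟨x, hx⟩ ⟨y, hy⟩
    simp only [LinearMap.BilinForm.restrict_apply, LinearMap.domRestrict_apply, hxx, zero_mul,
      hsymm.eq y x] at cauchy_schwarz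
    exact mul_self_eq_zero.1 (le_antisymm cauchy_schwarz (mul_self_nonneg _))
  have inf_le_orthogonal : V ⊓ V.map J ≤ β.orthogonal (V ⊔ V.map J) := by
    rintro _ ⟨hJx, x, hx, rfl⟩ y hy
    obtain ⟨a, ha, _, ⟨b, hb, rfl⟩, rfl⟩ := Submodule.mem_sup.1 hy
    have hJxx : β (J x) (J x) = 0 := by
      linarith [hV _ hJx, hV x hx, hJ x x]
    have hxx : β x x = 0 := by linarith [hJ x x]
    rw [hsymm.eq, map_add, hJ, hrad hJx hJxx ha, hrad hx hxx hb,
      neg_zero, add_zero]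
  have finrank_inf_le := Submodule.finrank_mono inf_le_orthogonal
  rw [LinearMap.BilinForm.finrank_orthogonal hβ] at finrank_inf_le
  have finrank_sup_add := Submodule.finrank_sup_add_finrank_inf_eq V (V.map J)
  have finrank_sup_le := Submodule.finrank_le (V ⊔ V.map J)
  rw [← (Submodule.equivMapOfInjective J hinj V).finrank_eq] at finrank_sup_add
  omega

end BilinForm

section RealAlgebra

variable {B : Type*} [CommRing B]

theorem exists_sq_eq_neg_one_of_isNilpotent (h2 : IsUnit (2 : B)) {z : B}
    (hz : IsNilpotent (z ^ 2 + 1)) : ∃ r : B, r ^ 2 = -1 := by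
  have isUnit_z : IsUnit z := by
    have : IsUnit (z ^ 2) := by simpa using hz.isUnit_sub_one
    exact (isUnit_pow_iff two_ne_zero).1 this
  obtain ⟨r, ⟨-, hr⟩, -⟩ := Polynomial.existsUnique_nilpotent_sub_and_aeval_eq_zero
    (P := (Polynomial.X ^ 2 + 1 : Polynomial B)) (x := z) (by simpa using hz)
    (by simpa [one_add_one_eq_two] using h2.mul isUnit_z)
  exact ⟨r, eq_neg_of_add_eq_zero_left (by simpa using hr)⟩

variable [Algebra ℝ B] [Module.Finite ℝ B]

theorem exists_sq_add_one_mem_of_isEmpty_algHom [IsEmpty (B →ₐ[ℝ] ℝ)] (I : Ideal B)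
    [I.IsMaximal] : ∃ x : B, x ^ 2 + 1 ∈ I := by
  let := Ideal.Quotient.field I
  have : Algebra.IsAlgebraic ℝ (B ⧸ I) := Algebra.IsAlgebraic.of_finite ℝ _
  obtain ⟨⟨e⟩⟩ | ⟨⟨e⟩⟩ := Real.nonempty_algEquiv_or (B ⧸ I)
  · exact isEmptyElim (e.toAlgHom.comp (Ideal.Quotient.mkₐ ℝ I))
  · obtain ⟨x, hx⟩ := Ideal.Quotient.mk_surjective (e.symm Complex.I)
    refine ⟨x, Ideal.Quotient.eq_zero_iff_mem.1 ?_⟩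
    rw [map_add, map_pow, hx, map_one, ← map_pow, Complex.I_sq, map_neg, map_one, neg_add_cancel]

theorem exists_sq_eq_neg_one_of_isEmpty_algHom [IsEmpty (B →ₐ[ℝ] ℝ)] : ∃ r : B, r ^ 2 = -1 := by
  have : IsArtinianRing B := .of_finite ℝ B
  have h2 : IsUnit (2 : B) := by
    simpa only [map_ofNat] using (isUnit_iff_ne_zero.2 (two_ne_zero' ℝ)).map (algebraMap ℝ B)
  have (I : MaximalSpectrum B) : ∃ x : B, x ^ 2 + 1 ∈ I.asIdeal :=
    have := I.isMaximal
    exists_sq_add_one_mem_of_isEmpty_algHom I.asIdeal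
  choose x hx using this
  obtain ⟨y, hy⟩ := (IsArtinianRing.quotNilradicalEquivPi B).surjective
    fun I ↦ Ideal.Quotient.mk I.asIdeal (x I)
  obtain ⟨z, rfl⟩ := Ideal.Quotient.mk_surjective y
  refine exists_sq_eq_neg_one_of_isNilpotent h2 (z := z) ?_
  rw [← mem_nilradical, IsArtinianRing.nilradical_eq_iInf, Ideal.mem_iInf]
  intro I
  have hzx : Ideal.Quotient.mk I.asIdeal z = Ideal.Quotient.mk I.asIdeal (x I) := congrFun hy I
  rw [← Ideal.Quotient.eq_zero_iff_mem, map_add, map_pow, hzx, ← map_pow, ← map_add]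
  exact Ideal.Quotient.eq_zero_iff_mem.2 (hx I)

end RealAlgebra

section LinearAlgebra

variable {K : Type*} [Field K]

theorem exists_dual_eqOn_of_inf_le_ker {E : Type*} [AddCommGroup E] [Module K E]
    {U J : Submodule K E} {l : Module.Dual K E} (h : U ⊓ J ≤ LinearMap.ker l) :
    ∃ l' : Module.Dual K E, Set.EqOn l' l U ∧ J ≤ LinearMap.ker l' := by
  have hmem : l ∘ₗ U.subtype ∈ LinearMap.range (J.mkQ ∘ₗ U.subtype).dualMap := by
    rw [LinearMap.range_dualMap_eq_dualAnnihilator_ker, Submodule.mem_dualAnnihilator]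
    intro u hu
    exact h ⟨u.2, (Submodule.Quotient.mk_eq_zero J).1 hu⟩
  obtain ⟨ψ, hψ⟩ := hmem
  refine ⟨ψ ∘ₗ J.mkQ, fun u hu ↦ LinearMap.congr_fun hψ ⟨u, hu⟩, fun x hx ↦ ?_⟩
  simp [(Submodule.Quotient.mk_eq_zero J).2 hx]

theorem exists_isRelPrime_of_forall_prime_exists_not_dvd [Infinite K] {R : Type*} [CommRing R]
    [IsDomain R] [UniqueFactorizationMonoid R] [Algebra K R] (W : Submodule K R) {p : R}
    (hp : p ≠ 0) (h : ∀ u, Prime u → u ∣ p → ∃ w ∈ W, ¬u ∣ w) : ∃ w ∈ W, IsRelPrime p w := by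
  classical
  let multiples (u : R) : Submodule K W := ((Ideal.span {u}).restrictScalars K).comap W.subtype
  have mem_multiples {u : R} {w : W} : w ∈ multiples u ↔ u ∣ w := Ideal.mem_span_singleton
  let factors := (UniqueFactorizationMonoid.factors p).toFinset
  have top_notMem : ⊤ ∉ factors.image multiples := by
    intro htop
    obtain ⟨u, hu, hutop⟩ := Finset.mem_image.1 htop
    rw [Multiset.mem_toFinset] at hu
    obtain ⟨w, hw, hndvd⟩ := h u (UniqueFactorizationMonoid.prime_of_factor u hu)
      (UniqueFactorizationMonoid.dvd_of_mem_factors hu)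
    exact hndvd ((mem_multiples (w := ⟨w, hw⟩)).1 (hutop ▸ Submodule.mem_top))
  obtain ⟨w, hw⟩ := (Set.ne_univ_iff_exists_notMem _).1
    (Subspace.biUnion_ne_univ_of_top_notMem top_notMem)
  refine ⟨w, w.2, (UniqueFactorizationMonoid.isRelPrime_iff_no_prime_factors hp).2 ?_⟩
  intro u hup huw hu
  obtain ⟨q, hq, huq⟩ := UniqueFactorizationMonoid.exists_mem_factors_of_dvd hp hu.irreducible hup
  exact hw <| Set.mem_biUnion (Finset.mem_image_of_mem _ (Multiset.mem_toFinset.2 hq))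
    (mem_multiples.2 (huq.symm.dvd.trans huw))

end LinearAlgebra

section CommutativeAlgebra

theorem mem_span_pair_of_mul_mem {R S : Type*} [CommRing R] [IsDomain R] [CommRing S] [IsDomain S]
    [DecompositionMonoid S] {η : R →+* S} (hη : Function.Surjective η) {L p g : R} (hL : L ≠ 0)
    (hker : RingHom.ker η = Ideal.span {L}) (hp : η p ≠ 0) (hpg : IsRelPrime (η p) (η g)) {f : R}
    (hf : L * f ∈ Ideal.span {p, g}) : f ∈ Ideal.span {p, g} := by
  have dvd_of_map_eq {x y : R} (hxy : η x = η y) : L ∣ x - y := by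
    rw [← Ideal.mem_span_singleton, ← hker, RingHom.sub_mem_ker_iff, hxy]
  obtain ⟨a, b, hab⟩ := Ideal.mem_span_pair.1 hf
  have hηL : η L = 0 := by
    rw [← RingHom.mem_ker, hker]
    exact Ideal.mem_span_singleton_self L
  have syzygy : η a * η p + η b * η g = 0 := by
    rw [← map_mul, ← map_mul, ← map_add, hab, map_mul, hηL, zero_mul]
  obtain ⟨c, hc⟩ : η p ∣ η b := hpg.dvd_of_dvd_mul_right
    ⟨-η a, by linear_combination syzygy⟩
  obtain ⟨c, rfl⟩ := hη c
  have hca : η a = η (-(c * g)) := by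
    apply mul_left_cancel₀ hp
    rw [map_neg, map_mul]
    linear_combination syzygy - η g * hc
  obtain ⟨b', hb'⟩ := dvd_of_map_eq (hc.trans (map_mul η p c).symm)
  obtain ⟨a', ha'⟩ := dvd_of_map_eq hca
  refine Ideal.mem_span_pair.2 ⟨a', b', mul_left_cancel₀ hL ?_⟩
  linear_combination hab - p * ha' - g * hb'

open nonZeroDivisors in
theorem isRelPrime_map_fractionRing {A : Type*} [CommRing A] [IsDomain A]
    [UniqueFactorizationMonoid A] {p g : Polynomial A} (h : IsRelPrime p g) :
    IsRelPrime (p.map (algebraMap A (FractionRing A))) (g.map (algebraMap A (FractionRing A))) := by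
  classical
  have : NormalizedGCDMonoid A := Classical.choice inferInstance
  intro D hDp hDg
  have hD : D ≠ 0 := by
    rintro rfl
    have eq_zero {q : Polynomial A} (hq : 0 ∣ q.map (algebraMap A (FractionRing A))) : q = 0 :=
      (Polynomial.map_eq_zero_iff (IsFractionRing.injective A _)).1 (zero_dvd_iff.1 hq)
    rw [eq_zero hDp, eq_zero hDg] at h
    exact not_isUnit_zero (isRelPrime_zero_left.1 h)
  let q := IsLocalization.integerNormalization A⁰ D
  obtain ⟨b, hb, hbD⟩ := IsLocalization.integerNormalization_spec A⁰ D
  have isUnit_C_b : IsUnit (Polynomial.C (algebraMap A (FractionRing A) b)) :=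
    (IsLocalization.map_units (FractionRing A) ⟨b, hb⟩).map Polynomial.C
  have map_primPart_dvd : q.primPart.map (algebraMap A (FractionRing A)) ∣ D := by
    refine (Polynomial.map_dvd _ q.primPart_dvd).trans ?_
    rw [hbD, Algebra.smul_def, Polynomial.algebraMap_apply]
    exact (isUnit_C_b.mul_left_dvd).2 dvd_rfl
  have primPart_dvd {f : Polynomial A} (hf : D ∣ f.map (algebraMap A (FractionRing A))) :
      q.primPart ∣ f :=
    q.isPrimitive_primPart.dvd_of_fraction_map_dvd_fraction_map (map_primPart_dvd.trans hf)
  exact Polynomial.isUnit_or_eq_zero_of_isUnit_integerNormalization_primPart hD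
    (h (primPart_dvd hDp) (primPart_dvd hDg))

open nonZeroDivisors in
attribute [local instance] Polynomial.algebra Polynomial.isLocalization in
theorem exists_C_mem_span_pair_of_isRelPrime {A : Type*} [CommRing A] [IsDomain A]
    [UniqueFactorizationMonoid A] {p g : Polynomial A} (h : IsRelPrime p g) :
    ∃ r : A, r ≠ 0 ∧ Polynomial.C r ∈ Ideal.span {p, g} := by
  let K := FractionRing A
  have one_mem : (1 : Polynomial K) ∈
      (Ideal.span {p, g}).map (algebraMap (Polynomial A) (Polynomial K)) := by
    rw [Ideal.map_span, Set.image_pair, Ideal.mem_span_pair]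
    exact (isRelPrime_map_fractionRing h).isCoprime
  rw [← map_one (algebraMap (Polynomial A) (Polynomial K)),
    IsLocalization.algebraMap_mem_map_algebraMap_iff (A⁰.map Polynomial.C)] at one_mem
  obtain ⟨_, ⟨r, hr, rfl⟩, hmem⟩ := one_mem
  exact ⟨r, nonZeroDivisors.ne_zero hr, by simpa using hmem⟩

end CommutativeAlgebra

section Homogeneous

variable {σ R : Type*}

theorem aeval_mul_of_isHomogeneous [CommSemiring R] {A : Type*} [CommSemiring A] [Algebra R A]
    {f : MvPolynomial σ R} {n : ℕ} (hf : f.IsHomogeneous n) (c : A) (x : σ → A) :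
    aeval (fun i ↦ c * x i) f = c ^ n * aeval x f := by
  simp only [aeval_def, eval₂_eq, Finset.mul_sum, mul_pow, Finset.prod_mul_distrib,
    Finset.prod_pow_eq_pow_sum]
  refine Finset.sum_congr rfl fun d hd ↦ ?_
  have degree_eq : ∑ i ∈ d.support, d i = n := by
    by_contra hne
    exact mem_support_iff.1 hd (hf.coeff_eq_zero hne)
  rw [degree_eq, mul_left_comm]

attribute [local instance] gradedAlgebra in
theorem isHomogeneous_span_pair [CommRing R] {p g : MvPolynomial σ R} {m n : ℕ}
    (hp : p.IsHomogeneous m) (hg : g.IsHomogeneous n) :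
    (Ideal.span {p, g}).IsHomogeneous (homogeneousSubmodule σ R) := by
  refine Ideal.homogeneous_span _ _ ?_
  rintro _ (rfl | rfl)
  exacts [⟨m, hp⟩, ⟨n, hg⟩]

theorem mem_span_of_mem_span_insert_sub_one [CommRing R] {L : MvPolynomial σ R}
    (hL : L.IsHomogeneous 1) {s : Set (MvPolynomial σ R)}
    (hs : ∀ f ∈ s, ∃ n, f.IsHomogeneous n)
    (hreg : ∀ f, L * f ∈ Ideal.span s → f ∈ Ideal.span s) {f : MvPolynomial σ R} {n : ℕ}
    (hf : f.IsHomogeneous n) (hmem : f ∈ Ideal.span (insert (L - 1) s)) : f ∈ Ideal.span s := by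
  let A := MvPolynomial σ R ⧸ Ideal.span s
  let mk : MvPolynomial σ R →ₐ[R] A := Ideal.Quotient.mkₐ R _
  have mk_eq_zero {h : MvPolynomial σ R} : mk h = 0 ↔ h ∈ Ideal.span s :=
    Ideal.Quotient.eq_zero_iff_mem
  have mk_L_regular : mk L ∈ nonZeroDivisors A := by
    refine mem_nonZeroDivisors_iff_left.2 fun x hx ↦ ?_
    obtain ⟨h, rfl⟩ := Ideal.Quotient.mkₐ_surjective R _ x
    rw [← map_mul] at hx
    exact mk_eq_zero.2 (hreg h (mk_eq_zero.1 hx))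
  let loc : A →ₐ[R] Localization.Away (mk L) := IsScalarTower.toAlgHom R A _
  have loc_injective : Function.Injective loc :=
    IsLocalization.injective _ (Submonoid.powers_le.2 mk_L_regular)
  let inv : Localization.Away (mk L) := IsLocalization.Away.invSelf (mk L)
  have inv_mul : inv * loc (mk L) = 1 := by
    rw [mul_comm]
    exact IsLocalization.Away.mul_invSelf (mk L)
  let χ : MvPolynomial σ R →ₐ[R] Localization.Away (mk L) := aeval fun i ↦ inv * loc (mk (X i))
  have χ_apply {h : MvPolynomial σ R} {k : ℕ} (hh : h.IsHomogeneous k) :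
      χ h = inv ^ k * loc (mk h) := by
    rw [aeval_mul_of_isHomogeneous hh]
    exact congrArg _ (AlgHom.congr_fun (aeval_unique (loc.comp mk)) h).symm
  have span_le_ker : Ideal.span (insert (L - 1) s) ≤ RingHom.ker χ := by
    rw [Ideal.span_le]
    rintro h (rfl | hh)
    · simp [χ_apply hL, inv_mul]
    · obtain ⟨k, hk⟩ := hs h hh
      simp [χ_apply hk, mk_eq_zero.2 (Ideal.subset_span hh)]
  have χ_f : inv ^ n * loc (mk f) = 0 := (χ_apply hf).symm.trans (span_le_ker hmem)
  have isUnit_inv : IsUnit inv := .of_mul_eq_one _ inv_mul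
  rwa [(isUnit_inv.pow n).mul_right_eq_zero, map_eq_zero_iff loc loc_injective, mk_eq_zero] at χ_f

attribute [local instance] gradedAlgebra in
theorem homogeneousComponent_mul_of_isHomogeneous [CommSemiring R] {a : MvPolynomial σ R} {i : ℕ}
    (ha : a.IsHomogeneous i) (b : MvPolynomial σ R) (n : ℕ) :
    homogeneousComponent n (a * b) = if i ≤ n then a * homogeneousComponent (n - i) b else 0 := by
  have decompose_eq (f : MvPolynomial σ R) (j : ℕ) :
      (DirectSum.decompose (homogeneousSubmodule σ R) f j : MvPolynomial σ R) =
        homogeneousComponent j f :=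
    decomposition.decompose'_apply f j
  simpa only [decompose_eq] using
    DirectSum.coe_decompose_mul_of_left_mem (homogeneousSubmodule σ R) (b := b) n ha

theorem isHomogeneous_of_mul [CommRing R] [IsDomain R] {a b : MvPolynomial σ R} {i k : ℕ}
    (ha : a.IsHomogeneous i) (ha₀ : a ≠ 0) (hab : (a * b).IsHomogeneous (i + k)) :
    b.IsHomogeneous k := by
  have component_eq := homogeneousComponent_mul_of_isHomogeneous ha b (i + k)
  rw [if_pos (Nat.le_add_right i k), Nat.add_sub_cancel_left, homogeneousComponent_of_mem hab,
    if_pos rfl] at component_eq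
  rw [mul_left_cancel₀ ha₀ component_eq]
  exact homogeneousComponent_isHomogeneous k b

theorem map_eq_zero_of_mem_span_pair [CommRing R] {M : Type*} [AddCommGroup M] [Module R M]
    {l : MvPolynomial σ R →ₗ[R] M} {p g f : MvPolynomial σ R} {m n N : ℕ}
    (hp : p.IsHomogeneous m) (hg : g.IsHomogeneous n) (hf : f.IsHomogeneous N)
    (hlp : ∀ q i, q.IsHomogeneous i → m + i = N → l (p * q) = 0)
    (hlg : ∀ q i, q.IsHomogeneous i → n + i = N → l (g * q) = 0)
    (hmem : f ∈ Ideal.span {p, g}) : l f = 0 := by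
  have component_eq_zero {u b : MvPolynomial σ R} {j : ℕ} (hu : u.IsHomogeneous j)
      (hl : ∀ q i, q.IsHomogeneous i → j + i = N → l (u * q) = 0) :
      l (homogeneousComponent N (u * b)) = 0 := by
    rw [homogeneousComponent_mul_of_isHomogeneous hu]
    split_ifs with hj
    · exact hl _ _ (homogeneousComponent_isHomogeneous _ b) (Nat.add_sub_cancel' hj)
    · exact map_zero l
  obtain ⟨a, b, rfl⟩ := Ideal.mem_span_pair.1 hmem
  have component_self := homogeneousComponent_of_mem (m := N) hf
  rw [if_pos rfl, mul_comm a, mul_comm b, map_add] at component_self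
  rw [mul_comm a, mul_comm b, ← component_self, map_add, component_eq_zero hp hlp,
    component_eq_zero hg hlg, add_zero]

end Homogeneous

section Elimination

theorem exists_isHomogeneous_rename_succ_mem_span_pair {R : Type*} [CommRing R] [IsDomain R]
    [UniqueFactorizationMonoid R] {k m n : ℕ} {p g : MvPolynomial (Fin (k + 1)) R}
    (hp : p.IsHomogeneous m) (hg : g.IsHomogeneous n) (hpg : IsRelPrime p g) :
    ∃ (e : ℕ) (r : MvPolynomial (Fin k) R),
      r ≠ 0 ∧ r.IsHomogeneous e ∧ rename Fin.succ r ∈ Ideal.span {p, g} := by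
  let Φ := finSuccEquiv R k
  have hΦ : IsRelPrime (Φ p) (Φ g) := by
    intro d hdp hdg
    have isUnit_symm : IsUnit (Φ.symm d) :=
      hpg (by simpa using map_dvd Φ.symm hdp) (by simpa using map_dvd Φ.symm hdg)
    simpa using isUnit_symm.map Φ
  obtain ⟨r, hr, hmem⟩ := exists_C_mem_span_pair_of_isRelPrime hΦ
  have Φ_rename (q : MvPolynomial (Fin k) R) : Φ (rename Fin.succ q) = Polynomial.C q := by
    induction q using MvPolynomial.induction_on with
    | C a => simp [Φ, finSuccEquiv_apply]
    | add _ _ h₁ h₂ => simp only [map_add, h₁, h₂]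
    | mul_X _ _ h => simp [Φ, finSuccEquiv_X_succ, h]
  have rename_mem : rename Fin.succ r ∈ Ideal.span {p, g} := by
    obtain ⟨a, b, hab⟩ := Ideal.mem_span_pair.1 hmem
    refine Ideal.mem_span_pair.2 ⟨Φ.symm a, Φ.symm b, Φ.injective ?_⟩
    simpa [Φ_rename] using hab
  obtain ⟨e, he⟩ : ∃ e, homogeneousComponent e r ≠ 0 := by
    by_contra! h
    exact hr (by rw [← sum_homogeneousComponent r, Finset.sum_eq_zero fun e _ ↦ h e])
  refine ⟨e, homogeneousComponent e r, he, homogeneousComponent_isHomogeneous e r, ?_⟩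
  rw [rename_homogeneousComponent]
  exact homogeneousComponent_mem_of_mem (isHomogeneous_span_pair hp hg) rename_mem e

end Elimination

section Nullstellensatz

theorem isRelPrime_X_X {σ R : Type*} [CommRing R] [IsDomain R] {i j : σ} (hij : i ≠ j) :
    IsRelPrime (X i : MvPolynomial σ R) (X j) :=
  X_prime.irreducible.isRelPrime_iff_not_dvd.2 fun hdvd ↦ hij (by simpa using hdvd)

theorem exists_ne_zero_aeval_eq_zero_of_not_isUnit {σ 𝕜 : Type*} (K : Type*) [Finite σ]
    [Nontrivial σ] [Field 𝕜] [Field K] [IsAlgClosed K] [Algebra 𝕜 K] {u : MvPolynomial σ 𝕜}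
    (hu : ¬IsUnit u) : ∃ z : σ → K, z ≠ 0 ∧ aeval z u = 0 := by
  by_contra! h
  have dvd_X_pow (i : σ) : ∃ k, u ∣ X i ^ k := by
    have hmem : X i ∈ vanishingIdeal 𝕜 (zeroLocus K (Ideal.span {u})) := by
      rw [mem_vanishingIdeal_iff]
      intro z hz
      have hz₀ : z = 0 := by
        by_contra hne
        exact h z hne (hz u (Ideal.mem_span_singleton_self u))
      simp [hz₀]
    rw [vanishingIdeal_zeroLocus_eq_radical] at hmem
    obtain ⟨k, hk⟩ := hmem
    exact ⟨k, Ideal.mem_span_singleton.1 hk⟩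
  obtain ⟨i, j, hij⟩ := exists_pair_ne σ
  obtain ⟨a, ha⟩ := dvd_X_pow i
  obtain ⟨b, hb⟩ := dvd_X_pow j
  exact hu ((isRelPrime_X_X hij).pow ha hb)

end Nullstellensatz

section LineRestriction

variable {𝕜 : Type*} [Field 𝕜] {v : Fin 2 → 𝕜}

/-- The linear form `v₁ x₁ - v₀ x₂`, defining the projective line through the points `(1, 0, 0)`
and `(0, v₀, v₁)`. -/
noncomputable def lineForm (v : Fin 2 → 𝕜) : MvPolynomial (Fin 3) 𝕜 :=
  C (v 1) * X 1 - C (v 0) * X 2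

/-- Restriction of ternary polynomials to the line `lineForm v = 0`, parametrized by
`(x₀, x₁) ↦ (x₀, v₀ x₁, v₁ x₁)`. -/
noncomputable def restrictLine (v : Fin 2 → 𝕜) :
    MvPolynomial (Fin 3) 𝕜 →ₐ[𝕜] MvPolynomial (Fin 2) 𝕜 :=
  aeval ![X 0, C (v 0) * X 1, C (v 1) * X 1]

/-- A section of `restrictLine v`, for `v 1 ≠ 0`. -/
noncomputable def extendLine (v : Fin 2 → 𝕜) :
    MvPolynomial (Fin 2) 𝕜 →ₐ[𝕜] MvPolynomial (Fin 3) 𝕜 :=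
  aeval ![X 0, C (v 1)⁻¹ * X 2]

theorem isHomogeneous_lineForm : (lineForm v).IsHomogeneous 1 :=
  (isHomogeneous_C_mul_X _ _).sub (isHomogeneous_C_mul_X _ _)

theorem lineForm_ne_zero (hv : v 1 ≠ 0) : lineForm v ≠ 0 := by
  intro h
  have eval_lineForm : eval ![0, 1, 0] (lineForm v) = v 1 := by simp [lineForm]
  rw [h, map_zero] at eval_lineForm
  exact hv eval_lineForm.symm

theorem isHomogeneous_restrictLine {f : MvPolynomial (Fin 3) 𝕜} {k : ℕ} (hf : f.IsHomogeneous k) :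
    (restrictLine v f).IsHomogeneous k := by
  rw [← one_mul k]
  refine hf.aeval _ fun i ↦ ?_
  fin_cases i
  exacts [isHomogeneous_X _ _, isHomogeneous_C_mul_X _ _, isHomogeneous_C_mul_X _ _]

theorem isHomogeneous_extendLine {f : MvPolynomial (Fin 2) 𝕜} {k : ℕ} (hf : f.IsHomogeneous k) :
    (extendLine v f).IsHomogeneous k := by
  rw [← one_mul k]
  refine hf.aeval _ fun i ↦ ?_
  fin_cases i
  exacts [isHomogeneous_X _ _, isHomogeneous_C_mul_X _ _]

theorem C_mul_C_inv_mul {σ : Type*} {c : 𝕜} (hc : c ≠ 0) (f : MvPolynomial σ 𝕜) :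
    C c * (C c⁻¹ * f) = f := by
  rw [← mul_assoc, ← C_mul, mul_inv_cancel₀ hc, C_1, one_mul]

theorem restrictLine_extendLine (hv : v 1 ≠ 0) (f : MvPolynomial (Fin 2) 𝕜) :
    restrictLine v (extendLine v f) = f := by
  refine AlgHom.congr_fun (φ₁ := (restrictLine v).comp (extendLine v)) (φ₂ := AlgHom.id 𝕜 _) ?_ f
  ext i : 1
  fin_cases i
  · simp [restrictLine, extendLine]
  · simp [restrictLine, extendLine, mul_left_comm (C (v 1)⁻¹), C_mul_C_inv_mul hv]

theorem lineForm_dvd_sub_extendLine_restrictLine (hv : v 1 ≠ 0) (f : MvPolynomial (Fin 3) 𝕜) :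
    lineForm v ∣ f - extendLine v (restrictLine v f) := by
  rw [← Ideal.mem_span_singleton, ← Ideal.Quotient.mk_eq_mk_iff_sub_mem]
  refine AlgHom.congr_fun (φ₁ := Ideal.Quotient.mkₐ 𝕜 (Ideal.span {lineForm v}))
    (φ₂ := (Ideal.Quotient.mkₐ 𝕜 _).comp ((extendLine v).comp (restrictLine v))) ?_ f
  ext i : 1
  simp only [AlgHom.comp_apply, Ideal.Quotient.mkₐ_eq_mk, Ideal.Quotient.mk_eq_mk_iff_sub_mem,
    Ideal.mem_span_singleton]
  fin_cases i
  · simp [restrictLine, extendLine]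
  · refine ⟨C (v 1)⁻¹, ?_⟩
    have C_inv_mul_C : (C (v 1)⁻¹ * C (v 1) : MvPolynomial (Fin 3) 𝕜) = 1 := by
      rw [← C_mul, inv_mul_cancel₀ hv, C_1]
    simp only [Fin.mk_one, extendLine, aeval_eq_bind₁, restrictLine, bind₁_X_right,
      Matrix.cons_val_one, Matrix.cons_val_zero, map_mul, algHom_C, algebraMap_eq,
      Matrix.cons_val_fin_one, lineForm]
    linear_combination (-X 1) * C_inv_mul_C
  · simp [restrictLine, extendLine, C_mul_C_inv_mul hv]

theorem restrictLine_lineForm : restrictLine v (lineForm v) = 0 := by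
  simp [restrictLine, lineForm, mul_left_comm]

theorem ker_restrictLine (hv : v 1 ≠ 0) :
    RingHom.ker (restrictLine v) = Ideal.span {lineForm v} := by
  refine le_antisymm (fun f hf ↦ ?_) ?_
  · have := lineForm_dvd_sub_extendLine_restrictLine hv f
    rwa [(RingHom.mem_ker).1 hf, map_zero, sub_zero, ← Ideal.mem_span_singleton] at this
  · rw [Ideal.span_singleton_le_iff_mem, RingHom.mem_ker, restrictLine_lineForm]

theorem restrictLine_rename_succ {r : MvPolynomial (Fin 2) 𝕜} {e : ℕ} (hr : r.IsHomogeneous e) :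
    restrictLine v (rename Fin.succ r) = X 1 ^ e * C (eval v r) := by
  have hcomp : restrictLine v (rename Fin.succ r) =
      aeval (fun i ↦ X 1 * (C (v i) : MvPolynomial (Fin 2) 𝕜)) r := by
    rw [restrictLine, aeval_rename]
    congr 1
    ext i : 1
    fin_cases i <;> simp [mul_comm]
  rw [hcomp, aeval_mul_of_isHomogeneous hr]
  congr 1
  exact aeval_algebraMap_apply (MvPolynomial (Fin 2) 𝕜) v r

theorem eval_restrictLine (f : MvPolynomial (Fin 3) 𝕜) :
    eval ![1, 0] (restrictLine v f) = eval ![1, 0, 0] f := by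
  refine AlgHom.congr_fun (φ₁ := (aeval ![1, 0]).comp (restrictLine v))
    (φ₂ := aeval ![1, 0, 0]) ?_ f
  ext i : 1
  fin_cases i <;> simp [restrictLine]

theorem exists_isRelPrime_restrictLine [Infinite 𝕜] {p g : MvPolynomial (Fin 3) 𝕜} {m n : ℕ}
    (hp : p.IsHomogeneous m) (hg : g.IsHomogeneous n) (hpg : IsRelPrime p g)
    (hp₀ : eval ![1, 0, 0] p ≠ 0) :
    ∃ v : Fin 2 → 𝕜, v 1 ≠ 0 ∧ IsRelPrime (restrictLine v p) (restrictLine v g) := by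
  obtain ⟨e, r, hr, hre, hmem⟩ := exists_isHomogeneous_rename_succ_mem_span_pair hp hg hpg
  obtain ⟨v, hv⟩ : ∃ v, eval v (X 1 * r) ≠ 0 := by
    by_contra! h
    exact mul_ne_zero (X_ne_zero 1) hr (funext fun v ↦ by rw [h v, map_zero])
  rw [map_mul, eval_X, mul_ne_zero_iff] at hv
  refine ⟨v, hv.1, fun d hdp hdg ↦ ?_⟩
  have dvd_X_pow : d ∣ X 1 ^ e := by
    obtain ⟨a, b, hab⟩ := Ideal.mem_span_pair.1 hmem
    have hdvd : d ∣ restrictLine v (rename Fin.succ r) := by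
      rw [← hab, map_add, map_mul, map_mul]
      exact dvd_add (hdp.mul_left _) (hdg.mul_left _)
    rw [restrictLine_rename_succ hre] at hdvd
    exact ((IsUnit.mk0 _ hv.2).map C).dvd_mul_right.1 hdvd
  have X_not_dvd : ¬X 1 ∣ restrictLine v p := by
    rintro ⟨c, hc⟩
    apply hp₀
    rw [← eval_restrictLine (v := v), hc]
    simp
  have X_isRelPrime : IsRelPrime (X 1) (restrictLine v p) :=
    X_prime.irreducible.isRelPrime_iff_not_dvd.2 X_not_dvd
  exact X_isRelPrime.pow_left dvd_X_pow hdp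

end LineRestriction

section Dimension

theorem finrank_map_add_finrank_inf_ker {K V W : Type*} [Field K] [AddCommGroup V] [Module K V]
    [AddCommGroup W] [Module K W] (f : V →ₗ[K] W) (M : Submodule K V) [Module.Finite K M] :
    Module.finrank K (M.map f) + Module.finrank K ↥(M ⊓ LinearMap.ker f) = Module.finrank K M := by
  rw [← (f.domRestrict M).finrank_range_add_finrank_ker, LinearMap.range_domRestrict,
    LinearMap.ker_domRestrict, ← Submodule.map_comap_subtype, Submodule.finrank_map_subtype_eq]

theorem finrank_map_add_finrank_comap {K V W : Type*} [Field K] [AddCommGroup V] [Module K V]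
    [AddCommGroup W] [Module K W] {f : V →ₗ[K] W} {g : V →ₗ[K] V} (hg : Function.Injective g)
    (hfg : Function.Exact g f) (M : Submodule K V) [Module.Finite K M] :
    Module.finrank K (M.map f) + Module.finrank K (M.comap g) = Module.finrank K M := by
  rw [← finrank_map_add_finrank_inf_ker f M, hfg.linearMap_ker_eq, inf_comm,
    ← Submodule.map_comap_eq,
    LinearEquiv.finrank_eq (Submodule.equivMapOfInjective g hg (M.comap g))]

end Dimension

section BinaryForms

variable {𝕜 : Type*} [Field 𝕜]

instance finite_homogeneousSubmodule {σ : Type*} [Finite σ] (k : ℕ) :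
    Module.Finite 𝕜 (homogeneousSubmodule σ 𝕜 k) :=
  Module.Finite.iff_fg.2 (homogeneousSubmodule_fg σ 𝕜 k)

theorem aeval_X_one_mem_degreeLT {f : MvPolynomial (Fin 2) 𝕜} {k : ℕ} (hf : f.IsHomogeneous k) :
    aeval ![Polynomial.X, 1] f ∈ Polynomial.degreeLT 𝕜 (k + 1) := by
  rw [f.as_sum, map_sum]
  refine Submodule.sum_mem _ fun d hd ↦ ?_
  have d_degree : d.degree = k := by
    rw [Finsupp.degree_eq_weight_one]
    exact hf (mem_support_iff.1 hd)
  have d_lt : d 0 < k + 1 := Nat.lt_succ_of_le (d_degree ▸ Finsupp.le_degree 0 d)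
  have aeval_monomial_eq : aeval ![Polynomial.X, 1] (monomial d (coeff d f)) =
      Polynomial.monomial (d 0) (coeff d f) := by
    simp [aeval_monomial, Finsupp.prod_fintype, Polynomial.C_mul_X_pow_eq_monomial]
  rw [aeval_monomial_eq, Polynomial.mem_degreeLT]
  exact (Polynomial.degree_monomial_le _ _).trans_lt (by exact_mod_cast d_lt)

theorem finrank_homogeneousSubmodule_fin_two (k : ℕ) :
    Module.finrank 𝕜 (homogeneousSubmodule (Fin 2) 𝕜 k) = k + 1 := by
  let h := (Polynomial.homogenizeLM k).domRestrict (Polynomial.degreeLT 𝕜 (k + 1))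
  have h_injective : Function.Injective h := by
    rw [← LinearMap.ker_eq_bot, LinearMap.ker_eq_bot']
    rintro ⟨f, hf⟩ hf₀
    rw [Polynomial.degreeLT_succ_eq_degreeLE, Polynomial.mem_degreeLE,
      ← Polynomial.natDegree_le_iff_degree_le] at hf
    exact Subtype.ext (Polynomial.eq_zero_of_homogenize_eq_zero hf hf₀)
  have range_h : LinearMap.range h = homogeneousSubmodule (Fin 2) 𝕜 k := by
    rw [LinearMap.range_domRestrict]
    refine le_antisymm ?_ fun f hf ↦ ⟨aeval ![Polynomial.X, 1] f, ?_, ?_⟩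
    · rintro _ ⟨f, -, rfl⟩
      exact Polynomial.isHomogeneous_homogenize f
    · exact aeval_X_one_mem_degreeLT hf
    · exact Polynomial.homogenize_eq_of_isHomogeneous hf rfl
  rw [← range_h, LinearMap.finrank_range_of_inj h_injective,
    (Polynomial.degreeLTEquiv 𝕜 (k + 1)).finrank_eq, Module.finrank_fin_fun]

theorem finrank_lt_finrank_of_X_mul_mem {σ : Type*} {i j : σ} (hij : i ≠ j)
    {A A' : Submodule 𝕜 (MvPolynomial σ 𝕜)} [Module.Finite 𝕜 A'] (hA : A ≠ ⊥)
    (hi : ∀ f ∈ A, X i * f ∈ A') (hj : ∀ f ∈ A, X j * f ∈ A') :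
    Module.finrank 𝕜 A < Module.finrank 𝕜 A' := by
  let mulX := LinearMap.mulLeft 𝕜 (X i : MvPolynomial σ 𝕜)
  have mulX_injective : Function.Injective mulX := mul_right_injective₀ (X_ne_zero i)
  have map_le : A.map mulX ≤ A' := Submodule.map_le_iff_le_comap.2 hi
  rw [(Submodule.equivMapOfInjective mulX mulX_injective A).finrank_eq]
  refine Submodule.finrank_lt_finrank_of_lt (map_le.lt_of_ne fun map_eq ↦ hA ?_)
  have X_pow_dvd (k : ℕ) : ∀ f ∈ A, X i ^ k ∣ f := by
    induction k with
    | zero => simp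
    | succ k ih =>
      intro f hf
      obtain ⟨f', hf', hff'⟩ := map_eq ▸ hj f hf
      have hdvd : X i ^ (k + 1) ∣ X j * f := by
        rw [← hff', pow_succ']
        exact mul_dvd_mul_left _ (ih f' hf')
      exact (isRelPrime_X_X hij).pow_left.dvd_of_dvd_mul_left hdvd
  rw [Submodule.eq_bot_iff]
  intro f hf
  by_contra hf₀
  have hdeg := totalDegree_le_of_dvd_of_isDomain (X_pow_dvd (f.totalDegree + 1) f hf) hf₀
  rw [totalDegree_X_pow] at hdeg
  omega

theorem add_le_finrank_of_isRelPrime {σ : Type*} [Finite σ] {m a b : ℕ}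
    {p g : MvPolynomial σ 𝕜} (hp : p.IsHomogeneous m) (hp₀ : p ≠ 0) (hg₀ : g ≠ 0)
    (hpg : IsRelPrime p g) (hbm : b < m) {A : Submodule 𝕜 (MvPolynomial σ 𝕜)} [Module.Finite 𝕜 A]
    (hpA : ∀ f, f.IsHomogeneous a → p * f ∈ A) (hgA : ∀ f, f.IsHomogeneous b → g * f ∈ A) :
    Module.finrank 𝕜 (homogeneousSubmodule σ 𝕜 a) + Module.finrank 𝕜 (homogeneousSubmodule σ 𝕜 b) ≤
      Module.finrank 𝕜 A := by
  let P := (homogeneousSubmodule σ 𝕜 a).map (LinearMap.mulLeft 𝕜 p)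
  let G := (homogeneousSubmodule σ 𝕜 b).map (LinearMap.mulLeft 𝕜 g)
  have disjoint_PG : P ⊓ G = ⊥ := by
    rw [Submodule.eq_bot_iff]
    rintro _ ⟨⟨u, -, rfl⟩, w, hw, hwu : g * w = p * u⟩
    have hdvd : p ∣ w := hpg.dvd_of_dvd_mul_left ⟨u, hwu⟩
    by_contra hne
    have hw₀ : w ≠ 0 := by
      rintro rfl
      exact hne (by rw [LinearMap.mulLeft_apply, ← hwu, mul_zero])
    have hdeg := totalDegree_le_of_dvd_of_isDomain hdvd hw₀
    rw [hp.totalDegree hp₀, IsHomogeneous.totalDegree hw hw₀] at hdeg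
    omega
  have finrank_sup : Module.finrank 𝕜 ↥(P ⊔ G) = Module.finrank 𝕜 P + Module.finrank 𝕜 G := by
    rw [← Submodule.finrank_sup_add_finrank_inf_eq, disjoint_PG, finrank_bot, add_zero]
  have finrank_P := (Submodule.equivMapOfInjective (LinearMap.mulLeft 𝕜 p)
    (mul_right_injective₀ hp₀) (homogeneousSubmodule σ 𝕜 a)).finrank_eq
  have finrank_G := (Submodule.equivMapOfInjective (LinearMap.mulLeft 𝕜 g)
    (mul_right_injective₀ hg₀) (homogeneousSubmodule σ 𝕜 b)).finrank_eq
  rw [finrank_P, finrank_G, ← finrank_sup]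
  exact Submodule.finrank_mono
    (sup_le (Submodule.map_le_iff_le_comap.2 hpA) (Submodule.map_le_iff_le_comap.2 hgA))

end BinaryForms

section Numeric

theorem eq_zero_and_sum_lt_two_mul_sum {h : ℕ → ℕ} {n : ℕ} (h_zero : h 0 ≠ 0)
    (h_le : ∀ k, h k ≤ k + 1) (h_anti : ∀ k, h k < k + 1 → h (k + 1) ≤ h k)
    (h_add_le : ∀ k, n < k → k ≤ 2 * n + 1 → h k + k ≤ 2 * n + 1) :
    (∀ k, 2 * n < k → h k = 0) ∧
      ∑ k ∈ Finset.range (2 * n + 1), h k < 2 * ∑ k ∈ Finset.range (n + 1), h k := by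
  have h_anti' {j k : ℕ} (hjk : j ≤ k) (hj : h j < j + 1) : h k ≤ h j := by
    induction k, hjk using Nat.le_induction with
    | base => rfl
    | succ k hjk ih => exact (h_anti k (by omega)).trans ih
  refine ⟨fun k hk ↦ ?_, ?_⟩
  · have h_top := h_add_le (2 * n + 1) (by omega) le_rfl
    have h_k := h_anti' (Nat.succ_le_of_lt hk) (by rw [Nat.succ_eq_add_one]; omega)
    rw [Nat.succ_eq_add_one] at h_k
    omega
  have reflect (i : ℕ) (hi : i < n) : h (n + 1 + i) ≤ h (n - 1 - i + 1) := by
    have h_bound := h_add_le (n + 1 + i) (by omega) (by omega)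
    rcases (h_le (n - 1 - i + 1)).lt_or_eq with hlt | heq
    · exact h_anti' (by omega) hlt
    · omega
  have upper_le : ∑ i ∈ Finset.range n, h (n + 1 + i) ≤ ∑ i ∈ Finset.range n, h (i + 1) := by
    rw [← Finset.sum_range_reflect (fun i ↦ h (i + 1))]
    exact Finset.sum_le_sum fun i hi ↦ reflect i (Finset.mem_range.1 hi)
  rw [show 2 * n + 1 = n + 1 + n by omega, Finset.sum_range_add, two_mul,
    Finset.sum_range_succ' h n]
  omega

end Numeric

section HilbertFunction

variable {𝕜 B : Type*} [Field 𝕜] [CommRing B] [Algebra 𝕜 B] {v : Fin 2 → 𝕜}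
  {π : MvPolynomial (Fin 3) 𝕜 →ₐ[𝕜] B}

theorem exact_lineForm_mul_restrictLine (hv : v 1 ≠ 0) :
    Function.Exact (LinearMap.mulLeft 𝕜 (lineForm v)) (restrictLine v).toLinearMap := by
  intro f
  rw [AlgHom.toLinearMap_apply, ← RingHom.mem_ker, ker_restrictLine hv,
    Ideal.mem_span_singleton]
  exact ⟨fun ⟨h, hh⟩ ↦ ⟨h, hh.symm⟩, fun ⟨h, hh⟩ ↦ ⟨h, hh.symm⟩⟩

theorem map_restrictLine_homogeneousSubmodule (hv : v 1 ≠ 0) (k : ℕ) :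
    (homogeneousSubmodule (Fin 3) 𝕜 k).map (restrictLine v).toLinearMap =
      homogeneousSubmodule (Fin 2) 𝕜 k := by
  refine le_antisymm ?_ fun f hf ↦
    ⟨extendLine v f, isHomogeneous_extendLine hf, restrictLine_extendLine hv f⟩
  rintro _ ⟨f, hf, rfl⟩
  exact isHomogeneous_restrictLine hf

theorem isHomogeneous_lineForm_mul_iff (hv : v 1 ≠ 0) {f : MvPolynomial (Fin 3) 𝕜} {k : ℕ} :
    (lineForm v * f).IsHomogeneous (k + 1) ↔ f.IsHomogeneous k := by
  rw [add_comm]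
  exact ⟨isHomogeneous_of_mul isHomogeneous_lineForm (lineForm_ne_zero hv),
    isHomogeneous_lineForm.mul⟩

variable (v π) in
/-- The restrictions to the line `lineForm v = 0` of the forms of degree `k` killed by `π`. When
`π (lineForm v) = 1`, their codimension in the binary forms of degree `k` is the `k`-th difference
of the dimensions of the images under `π` of the forms of a given degree. -/
noncomputable def restrictedKer (k : ℕ) : Submodule 𝕜 (MvPolynomial (Fin 2) 𝕜) :=
  (homogeneousSubmodule (Fin 3) 𝕜 k ⊓ LinearMap.ker π.toLinearMap).map (restrictLine v).toLinearMap

theorem restrictLine_mem_restrictedKer {f : MvPolynomial (Fin 3) 𝕜} {k : ℕ}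
    (hf : f.IsHomogeneous k) (hπf : π f = 0) : restrictLine v f ∈ restrictedKer v π k :=
  ⟨f, ⟨hf, hπf⟩, rfl⟩

theorem restrictedKer_le (k : ℕ) : restrictedKer v π k ≤ homogeneousSubmodule (Fin 2) 𝕜 k := by
  rintro _ ⟨f, ⟨hf, -⟩, rfl⟩
  exact isHomogeneous_restrictLine hf

instance finite_restrictedKer (k : ℕ) : Module.Finite 𝕜 (restrictedKer v π k) :=
  Submodule.finiteDimensional_of_le (restrictedKer_le k)

theorem mul_mem_restrictedKer (hv : v 1 ≠ 0) {a f : MvPolynomial (Fin 2) 𝕜} {j k : ℕ}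
    (ha : a.IsHomogeneous j) (hf : f ∈ restrictedKer v π k) :
    a * f ∈ restrictedKer v π (j + k) := by
  obtain ⟨h, ⟨hh, hπh : π h = 0⟩, rfl⟩ := hf
  have hmul := restrictLine_mem_restrictedKer (v := v) (π := π)
    ((isHomogeneous_extendLine (v := v) ha).mul hh) (by rw [map_mul, hπh, mul_zero])
  rwa [map_mul, restrictLine_extendLine hv] at hmul

theorem finrank_restrictedKer_zero [Nontrivial B] :
    Module.finrank 𝕜 (restrictedKer v π 0) = 0 := by
  rw [Submodule.finrank_eq_zero, Submodule.eq_bot_iff]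
  rintro _ ⟨f, ⟨hf, hπf⟩, rfl⟩
  rw [SetLike.mem_coe, homogeneousSubmodule_zero, Submodule.mem_one] at hf
  obtain ⟨c, rfl⟩ := hf
  have hc : algebraMap 𝕜 B c = 0 := (π.commutes c).symm.trans hπf
  rw [(map_eq_zero _).1 hc, map_zero, map_zero]

theorem finrank_restrictedKer_lt_succ (hv : v 1 ≠ 0) {k : ℕ} (hk : restrictedKer v π k ≠ ⊥) :
    Module.finrank 𝕜 (restrictedKer v π k) < Module.finrank 𝕜 (restrictedKer v π (k + 1)) := by
  rw [add_comm k 1]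
  exact finrank_lt_finrank_of_X_mul_mem (zero_ne_one (α := Fin 2)) hk
    (fun f hf ↦ mul_mem_restrictedKer hv (isHomogeneous_X _ _) hf)
    (fun f hf ↦ mul_mem_restrictedKer hv (isHomogeneous_X _ _) hf)

theorem finrank_map_homogeneousSubmodule_zero [Nontrivial B] :
    Module.finrank 𝕜 ((homogeneousSubmodule (Fin 3) 𝕜 0).map π.toLinearMap) = 1 := by
  rw [homogeneousSubmodule_zero, Submodule.map_one, Submodule.one_eq_span,
    finrank_span_singleton one_ne_zero]

theorem finrank_map_homogeneousSubmodule_succ (hv : v 1 ≠ 0) (hπ : π (lineForm v) = 1) (k : ℕ) :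
    Module.finrank 𝕜 ((homogeneousSubmodule (Fin 3) 𝕜 (k + 1)).map π.toLinearMap) +
        Module.finrank 𝕜 (restrictedKer v π (k + 1)) =
      Module.finrank 𝕜 ((homogeneousSubmodule (Fin 3) 𝕜 k).map π.toLinearMap) + (k + 2) := by
  let R (k : ℕ) := homogeneousSubmodule (Fin 3) 𝕜 k
  let K (k : ℕ) := R k ⊓ LinearMap.ker π.toLinearMap
  let mulL := LinearMap.mulLeft 𝕜 (lineForm v)
  have mulL_injective : Function.Injective mulL := mul_right_injective₀ (lineForm_ne_zero hv)
  have comap_R : (R (k + 1)).comap mulL = R k :=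
    Submodule.ext fun f ↦ isHomogeneous_lineForm_mul_iff hv
  have comap_K : (K (k + 1)).comap mulL = K k := by
    have comap_ker : (LinearMap.ker π.toLinearMap).comap mulL = LinearMap.ker π.toLinearMap := by
      ext f
      simp [mulL, hπ]
    rw [Submodule.comap_inf, comap_R, comap_ker]
  have finrank_R := finrank_map_add_finrank_comap mulL_injective
    (exact_lineForm_mul_restrictLine hv) (R (k + 1))
  have finrank_K := finrank_map_add_finrank_comap mulL_injective
    (exact_lineForm_mul_restrictLine hv) (K (k + 1))
  have finrank_F := finrank_map_add_finrank_inf_ker π.toLinearMap (R k)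
  have finrank_F_succ := finrank_map_add_finrank_inf_ker π.toLinearMap (R (k + 1))
  rw [comap_R, map_restrictLine_homogeneousSubmodule hv,
    finrank_homogeneousSubmodule_fin_two] at finrank_R
  rw [comap_K] at finrank_K
  change Module.finrank 𝕜 (restrictedKer v π (k + 1)) + _ = _ at finrank_K
  change _ + Module.finrank 𝕜 (K (k + 1)) = _ at finrank_F_succ
  change _ + Module.finrank 𝕜 (K k) = _ at finrank_F
  change Module.finrank 𝕜 ((R (k + 1)).map _) + _ = Module.finrank 𝕜 ((R k).map _) + _
  omega

theorem finrank_map_homogeneousSubmodule_eq_sum [Nontrivial B] (hv : v 1 ≠ 0)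
    (hπ : π (lineForm v) = 1) (k : ℕ) :
    Module.finrank 𝕜 ((homogeneousSubmodule (Fin 3) 𝕜 k).map π.toLinearMap) =
      ∑ i ∈ Finset.range (k + 1), (i + 1 - Module.finrank 𝕜 (restrictedKer v π i)) := by
  induction k with
  | zero => simp [finrank_map_homogeneousSubmodule_zero, finrank_restrictedKer_zero]
  | succ k ih =>
    have hsucc := finrank_map_homogeneousSubmodule_succ (π := π) hv hπ k
    have hle := Submodule.finrank_mono (restrictedKer_le (v := v) (π := π) (k + 1))
    rw [finrank_homogeneousSubmodule_fin_two] at hle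
    rw [Finset.sum_range_succ, ← ih]
    omega

theorem two_mul_le_add_finrank_restrictedKer (hv : v 1 ≠ 0) {p g : MvPolynomial (Fin 3) 𝕜} {n : ℕ}
    (hp : p.IsHomogeneous (n + 2)) (hg : g.IsHomogeneous n) (hπp : π p = 0) (hπg : π g = 0)
    (hp₀ : restrictLine v p ≠ 0) (hpg : IsRelPrime (restrictLine v p) (restrictLine v g)) {k : ℕ}
    (hnk : n < k) (hkn : k ≤ 2 * n + 1) :
    2 * k ≤ 2 * n + Module.finrank 𝕜 (restrictedKer v π k) := by
  have hηp := isHomogeneous_restrictLine (v := v) hp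
  have p_mem := restrictLine_mem_restrictedKer (v := v) hp hπp
  have g_mem := restrictLine_mem_restrictedKer (v := v) hg hπg
  have hg₀ : restrictLine v g ≠ 0 := by
    intro h
    rw [h, isRelPrime_zero_right] at hpg
    have := hηp.totalDegree hp₀
    rw [(isUnit_iff_totalDegree_of_isReduced.1 hpg).2] at this
    omega
  obtain rfl | ⟨i, rfl⟩ : k = n + 1 ∨ ∃ i, k = n + 2 + i := by
    rcases (Nat.succ_le_of_lt hnk).eq_or_lt with h | h
    · exact .inl h.symm
    · exact .inr ⟨k - (n + 2), by omega⟩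
  · have hne : restrictedKer v π n ≠ ⊥ := fun h ↦ hg₀ ((Submodule.eq_bot_iff _).1 h _ g_mem)
    have hpos := Submodule.one_le_finrank_iff.2 hne
    have hlt := finrank_restrictedKer_lt_succ hv hne
    omega
  · have hadd := add_le_finrank_of_isRelPrime (a := i) (b := i + 2)
      (A := restrictedKer v π (n + 2 + i)) hηp hp₀ hg₀ hpg (by omega)
      (fun f hf ↦ by
        rw [mul_comm, add_comm _ i]
        exact mul_mem_restrictedKer hv hf p_mem)
      (fun f hf ↦ by
        rw [mul_comm, show n + 2 + i = i + 2 + n by omega]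
        exact mul_mem_restrictedKer hv hf g_mem)
    rw [finrank_homogeneousSubmodule_fin_two, finrank_homogeneousSubmodule_fin_two] at hadd
    omega

theorem monotone_map_homogeneousSubmodule (hπ : π (lineForm v) = 1) :
    Monotone fun k ↦ (homogeneousSubmodule (Fin 3) 𝕜 k).map π.toLinearMap := by
  refine monotone_nat_of_le_succ fun k ↦ ?_
  rintro _ ⟨f, hf, rfl⟩
  refine ⟨lineForm v * f, ?_, by simp [hπ]⟩
  rw [add_comm]
  exact isHomogeneous_lineForm.mul hf

theorem map_homogeneousSubmodule_eq_top (hπ : π (lineForm v) = 1)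
    (hsurj : Function.Surjective π) {N : ℕ}
    (hN : ∀ k, N ≤ k → Module.finrank 𝕜 ((homogeneousSubmodule (Fin 3) 𝕜 k).map π.toLinearMap) =
      Module.finrank 𝕜 ((homogeneousSubmodule (Fin 3) 𝕜 N).map π.toLinearMap)) :
    (homogeneousSubmodule (Fin 3) 𝕜 N).map π.toLinearMap = ⊤ := by
  have mono := monotone_map_homogeneousSubmodule hπ
  have map_le (k : ℕ) : (homogeneousSubmodule (Fin 3) 𝕜 k).map π.toLinearMap ≤
      (homogeneousSubmodule (Fin 3) 𝕜 N).map π.toLinearMap := by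
    rcases le_total k N with hk | hk
    · exact mono hk
    · exact (Submodule.eq_of_le_of_finrank_eq (mono hk) (hN k hk).symm).ge
  refine eq_top_iff.2 fun b _ ↦ ?_
  obtain ⟨f, rfl⟩ := hsurj b
  rw [← sum_homogeneousComponent f, map_sum]
  exact Submodule.sum_mem _ fun k _ ↦ map_le k ⟨_, homogeneousComponent_isHomogeneous k f, rfl⟩

theorem finite_and_finrank_lt_of_isRelPrime_restrictLine [Nontrivial B] (hv : v 1 ≠ 0)
    (hπ : π (lineForm v) = 1) (hsurj : Function.Surjective π) {p g : MvPolynomial (Fin 3) 𝕜} {n : ℕ}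
    (hp : p.IsHomogeneous (n + 2)) (hg : g.IsHomogeneous n) (hπp : π p = 0) (hπg : π g = 0)
    (hp₀ : restrictLine v p ≠ 0) (hpg : IsRelPrime (restrictLine v p) (restrictLine v g)) :
    Module.Finite 𝕜 B ∧ Module.finrank 𝕜 B <
      2 * Module.finrank 𝕜 ((homogeneousSubmodule (Fin 3) 𝕜 n).map π.toLinearMap) := by
  let h (k : ℕ) := k + 1 - Module.finrank 𝕜 (restrictedKer v π k)
  have finrank_eq (k : ℕ) :
      Module.finrank 𝕜 ((homogeneousSubmodule (Fin 3) 𝕜 k).map π.toLinearMap) =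
        ∑ i ∈ Finset.range (k + 1), h i :=
    finrank_map_homogeneousSubmodule_eq_sum hv hπ k
  obtain ⟨h_eq_zero, sum_lt⟩ := eq_zero_and_sum_lt_two_mul_sum (h := h) (n := n)
    (by simp [h, finrank_restrictedKer_zero]) (fun k ↦ Nat.sub_le _ _)
    (fun k hk ↦ by
      have hne : restrictedKer v π k ≠ ⊥ := by
        intro hbot
        simp [h, hbot] at hk
      have := finrank_restrictedKer_lt_succ hv hne
      simp only [h]
      omega)
    (fun k hnk hkn ↦ by
      have := two_mul_le_add_finrank_restrictedKer hv hp hg hπp hπg hp₀ hpg hnk hkn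
      simp only [h]
      omega)
  have map_eq_top := map_homogeneousSubmodule_eq_top hπ hsurj (N := 2 * n) fun k hk ↦ by
    induction k, hk using Nat.le_induction with
    | base => rfl
    | succ k hk ih =>
      rw [← ih, finrank_eq, finrank_eq, Finset.sum_range_succ, h_eq_zero (k + 1) (by omega),
        add_zero]
  have finrank_B := finrank_top 𝕜 B
  rw [← map_eq_top, finrank_eq] at finrank_B
  refine ⟨.of_surjective
    (LinearMap.domRestrict π.toLinearMap (homogeneousSubmodule (Fin 3) 𝕜 (2 * n))) ?_,
    by rwa [← finrank_B, finrank_eq]⟩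
  rw [← LinearMap.range_eq_top, LinearMap.range_domRestrict, map_eq_top]

end HilbertFunction

section GorensteinIdeal

open Module

variable {K A : Type*} [Field K] [CommRing A] [Algebra K A] {l : Dual K A}

/-- The Gorenstein ideal of a linear functional `l` on a not necessarily graded algebra: the largest
ideal on which `l` vanishes. -/
def gorensteinIdeal (l : Dual K A) : Ideal A where
  carrier := {f | ∀ h, l (f * h) = 0}
  add_mem' hf hg h := by rw [add_mul, map_add, hf h, hg h, add_zero]
  zero_mem' h := by rw [zero_mul, map_zero]
  smul_mem' c f hf h := by rw [smul_eq_mul, mul_comm c, mul_assoc, hf]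

theorem mem_gorensteinIdeal {f : A} : f ∈ gorensteinIdeal l ↔ ∀ h, l (f * h) = 0 :=
  Iff.rfl

theorem le_gorensteinIdeal_iff {I : Ideal A} :
    I ≤ gorensteinIdeal l ↔ I.restrictScalars K ≤ LinearMap.ker l := by
  refine ⟨fun h f hf ↦ ?_, fun h f hf g ↦ h (I.mul_mem_right g hf)⟩
  simpa using mem_gorensteinIdeal.1 (h hf) 1

theorem nontrivial_quotient_gorensteinIdeal (hl : l ≠ 0) : Nontrivial (A ⧸ gorensteinIdeal l) := by
  refine Ideal.Quotient.nontrivial_iff.2 fun htop ↦ hl (LinearMap.ext fun f ↦ ?_)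
  simpa using le_gorensteinIdeal_iff.1 htop.ge (Submodule.mem_top (x := f))

variable (l) in
/-- The functional induced by `l` on the quotient by its Gorenstein ideal. -/
noncomputable def gorensteinDual : Dual K (A ⧸ gorensteinIdeal l) :=
  ((gorensteinIdeal l).restrictScalars K).liftQ l (le_gorensteinIdeal_iff.1 le_rfl) ∘ₗ
    (Submodule.Quotient.restrictScalarsEquiv K (gorensteinIdeal l)).symm.toLinearMap

theorem gorensteinDual_mk (f : A) : gorensteinDual l (Ideal.Quotient.mk _ f) = l f :=
  rfl

theorem eq_zero_of_gorensteinDual_mul_eq_zero {a : A ⧸ gorensteinIdeal l}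
    (ha : ∀ b, gorensteinDual l (a * b) = 0) : a = 0 := by
  obtain ⟨f, rfl⟩ := Ideal.Quotient.mk_surjective a
  exact Ideal.Quotient.eq_zero_iff_mem.2 fun g ↦ ha (Ideal.Quotient.mk _ g)

end GorensteinIdeal

section PositiveFunctional

open Module

theorem two_mul_finrank_le_of_sq_nonneg {B : Type*} [CommRing B] [Algebra ℝ B] [Module.Finite ℝ B]
    [IsEmpty (B →ₐ[ℝ] ℝ)] {l : Dual ℝ B} (hl : ∀ a, (∀ b, l (a * b) = 0) → a = 0)
    {V : Submodule ℝ B} (hV : ∀ a ∈ V, 0 ≤ l (a ^ 2)) : 2 * finrank ℝ V ≤ finrank ℝ B := by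
  obtain ⟨r, hr⟩ := exists_sq_eq_neg_one_of_isEmpty_algHom (B := B)
  let β : LinearMap.BilinForm ℝ B := (LinearMap.mul ℝ B).compr₂ l
  have hsymm : β.IsSymm := ⟨fun a b ↦ congrArg l (mul_comm a b)⟩
  have hβ : β.Nondegenerate :=
    (LinearMap.IsRefl.nondegenerate_iff_separatingLeft (B := β) hsymm.isRefl).2 hl
  refine two_mul_finrank_le_of_antiisometry hβ hsymm (J := LinearMap.mulLeft ℝ r) ?_ ?_
    fun a ha ↦ (hV a ha).trans_eq (congrArg l (pow_two a))
  · refine Function.LeftInverse.injective (g := fun a ↦ -r * a) fun a ↦ ?_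
    simp only [LinearMap.mulLeft_apply]
    linear_combination (-a) * hr
  · intro a b
    change l (r * a * (r * b)) = -l (a * b)
    rw [← map_neg]
    congr 1
    linear_combination (a * b) * hr

end PositiveFunctional

section Catalecticant

open Module

variable {σ R : Type*}

theorem homogeneousSubmodule_mul_homogeneousSubmodule [CommSemiring R] (m n : ℕ) :
    homogeneousSubmodule σ R m * homogeneousSubmodule σ R n =
      homogeneousSubmodule σ R (m + n) := by
  rw [← homogeneousSubmodule_one_pow R m, ← homogeneousSubmodule_one_pow R n, ← pow_add,
    homogeneousSubmodule_one_pow]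

variable [CommRing R] {n : ℕ} {l : Dual R (MvPolynomial σ R)}

/-- The middle catalecticant of a functional `l`: the bilinear form `(f, g) ↦ l (f * g)` on the
forms of degree `n`. -/
noncomputable def catalecticant (n : ℕ) :
    Dual R (MvPolynomial σ R) →ₗ[R] LinearMap.BilinForm R (homogeneousSubmodule σ R n) where
  toFun l := LinearMap.BilinForm.restrict ((LinearMap.mul R (MvPolynomial σ R)).compr₂ l)
    (homogeneousSubmodule σ R n)
  map_add' _ _ := LinearMap.ext₂ fun _ _ ↦ rfl
  map_smul' _ _ := LinearMap.ext₂ fun _ _ ↦ rfl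

theorem catalecticant_apply (f g : homogeneousSubmodule σ R n) :
    catalecticant n l f g = l (f * g : MvPolynomial σ R) :=
  rfl

theorem isSymm_catalecticant : (catalecticant n l).IsSymm :=
  ⟨fun f g ↦ congrArg l (mul_comm (f : MvPolynomial σ R) g)⟩

theorem catalecticant_eq_zero_iff :
    catalecticant n l = 0 ↔ homogeneousSubmodule σ R (n + n) ≤ LinearMap.ker l := by
  rw [← homogeneousSubmodule_mul_homogeneousSubmodule, Submodule.mul_le]
  exact ⟨fun h f hf g hg ↦ LinearMap.congr_fun₂ h ⟨f, hf⟩ ⟨g, hg⟩,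
    fun h ↦ LinearMap.ext₂ fun f g ↦ h f f.2 g g.2⟩

end Catalecticant

section RealPoint

open Module

theorem exists_eq_smul_ofReal_of_aeval_eq_smul {σ : Type*} {N : ℕ} {z : σ → ℂ}
    {l : Dual ℝ (MvPolynomial σ ℝ)} {c : ℂ} (hz : z ≠ 0)
    (h : ∀ f : MvPolynomial σ ℝ, f.IsHomogeneous (N + 1) → aeval z f = c * l f) :
    ∃ (a : ℂ) (x : σ → ℝ), a ≠ 0 ∧ x ≠ 0 ∧ ∀ i, z i = a * x i := by
  obtain ⟨i, hi⟩ := Function.ne_iff.1 hz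
  have aeval_eq (j : σ) : z i ^ N * z j = c * l (X i ^ N * X j) := by
    rw [← h _ ((isHomogeneous_X_pow i N).mul (isHomogeneous_X ℝ j)), map_mul, map_pow, aeval_X,
      aeval_X]
  have ne_zero : c * l (X i ^ N * X i) ≠ 0 := by
    rw [← aeval_eq]
    exact mul_ne_zero (pow_ne_zero _ hi) hi
  have hl : l (X i ^ N * X i) ≠ 0 := Complex.ofReal_ne_zero.1 (right_ne_zero_of_mul ne_zero)
  refine ⟨z i, fun j ↦ l (X i ^ N * X j) / l (X i ^ N * X i), hi, ?_, fun j ↦ ?_⟩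
  · exact Function.ne_iff.2 ⟨i, div_ne_zero hl hl⟩
  · rw [Complex.ofReal_div, mul_div_assoc', eq_div_iff (Complex.ofReal_ne_zero.2 hl)]
    refine mul_left_cancel₀ (mul_ne_zero (left_ne_zero_of_mul ne_zero) (pow_ne_zero N hi)) ?_
    linear_combination z i ^ (N + 1) * aeval_eq j - z i ^ N * z j * aeval_eq i

theorem aeval_ne_zero_of_aeval_eq_smul {σ : Type*} {m N : ℕ} {z : σ → ℂ}
    {l : Dual ℝ (MvPolynomial σ ℝ)} {c : ℂ} {p : MvPolynomial σ ℝ} (hp : p.IsHomogeneous m)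
    (hpos : ∀ x : σ → ℝ, x ≠ 0 → eval x p ≠ 0) (hz : z ≠ 0)
    (h : ∀ f : MvPolynomial σ ℝ, f.IsHomogeneous (N + 1) → aeval z f = c * l f) :
    aeval z p ≠ 0 := by
  obtain ⟨a, x, ha, hx, hzx⟩ := exists_eq_smul_ofReal_of_aeval_eq_smul hz h
  rw [_root_.funext hzx, aeval_mul_of_isHomogeneous hp]
  refine mul_ne_zero (pow_ne_zero _ ha) ?_
  rw [show (fun i ↦ (x i : ℂ)) = algebraMap ℝ ℂ ∘ x from rfl, aeval_algebraMap_apply]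
  simpa using hpos x hx

end RealPoint

section Dehomogenization

open Module

theorem exists_dual_eqOn_homogeneousSubmodule {𝕜 : Type*} [Field 𝕜] {v : Fin 2 → 𝕜}
    {p g : MvPolynomial (Fin 3) 𝕜} {m n N : ℕ} {l : Dual 𝕜 (MvPolynomial (Fin 3) 𝕜)}
    (hv : v 1 ≠ 0) (hp : p.IsHomogeneous m) (hg : g.IsHomogeneous n)
    (hp₀ : restrictLine v p ≠ 0) (hpg : IsRelPrime (restrictLine v p) (restrictLine v g))
    (hlp : ∀ q i, q.IsHomogeneous i → m + i = N → l (p * q) = 0)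
    (hlg : ∀ q i, q.IsHomogeneous i → n + i = N → l (g * q) = 0) :
    ∃ l' : Dual 𝕜 (MvPolynomial (Fin 3) 𝕜), Set.EqOn l' l (homogeneousSubmodule (Fin 3) 𝕜 N) ∧
      {lineForm v - 1, p, g} ⊆ (gorensteinIdeal l' : Set (MvPolynomial (Fin 3) 𝕜)) := by
  have lineForm_regular (f) (hf : lineForm v * f ∈ Ideal.span {p, g}) : f ∈ Ideal.span {p, g} :=
    mem_span_pair_of_mul_mem (η := (restrictLine v : _ →+* MvPolynomial (Fin 2) 𝕜))
      (fun f ↦ ⟨extendLine v f, restrictLine_extendLine hv f⟩) (lineForm_ne_zero hv)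
      (ker_restrictLine hv) hp₀ hpg hf
  have inf_le_ker : homogeneousSubmodule (Fin 3) 𝕜 N ⊓
      (Ideal.span {lineForm v - 1, p, g}).restrictScalars 𝕜 ≤ LinearMap.ker l := by
    rintro f ⟨hf, hmem⟩
    refine map_eq_zero_of_mem_span_pair hp hg hf hlp hlg
      (mem_span_of_mem_span_insert_sub_one isHomogeneous_lineForm ?_ lineForm_regular hf hmem)
    rintro _ (rfl | rfl)
    exacts [⟨m, hp⟩, ⟨n, hg⟩]
  obtain ⟨l', hl', hle⟩ := exists_dual_eqOn_of_inf_le_ker inf_le_ker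
  exact ⟨l', hl', Ideal.span_le.1 (le_gorensteinIdeal_iff.2 hle)⟩

theorem isEmpty_algHom_of_forall_eval_ne_zero {σ 𝕜 B : Type*} [Field 𝕜] [CommRing B] [Algebra 𝕜 B]
    {π : MvPolynomial σ 𝕜 →ₐ[𝕜] B} {L p : MvPolynomial σ 𝕜} (hL : constantCoeff L = 0)
    (hπL : π L = 1) (hπp : π p = 0) (hp : ∀ x : σ → 𝕜, x ≠ 0 → eval x p ≠ 0) :
    IsEmpty (B →ₐ[𝕜] 𝕜) := by
  refine ⟨fun φ ↦ ?_⟩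
  have comp_eq (f) : φ (π f) = eval (fun i ↦ φ (π (X i))) f :=
    (DFunLike.congr_fun (aeval_unique (φ.comp π)) f).trans rfl
  refine hp (fun i ↦ φ (π (X i))) (fun hx ↦ ?_) (by rw [← comp_eq, hπp, map_zero])
  have eval_L := comp_eq L
  rw [hx, eval_zero, hL, hπL, map_one] at eval_L
  exact one_ne_zero eval_L

theorem not_isRelPrime_of_mem_ker_catalecticant {k n : ℕ} (hk : k + 2 = n)
    {p : MvPolynomial (Fin 3) ℝ} {l : Dual ℝ (MvPolynomial (Fin 3) ℝ)}
    (hp : p.IsHomogeneous (n + 2)) (hpos : ∀ x : Fin 3 → ℝ, x ≠ 0 → eval x p ≠ 0)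
    (hl : (catalecticant n l).IsPosSemidef) (hl_ne : catalecticant n l ≠ 0)
    (hlp : ∀ q : MvPolynomial (Fin 3) ℝ, q.IsHomogeneous k → l (p * q) = 0)
    {g : homogeneousSubmodule (Fin 3) ℝ n} (hg : g ∈ LinearMap.ker (catalecticant n l)) :
    ¬IsRelPrime p g := by
  intro hpg
  have hp₀ : eval ![1, 0, 0] p ≠ 0 := hpos _ fun h ↦ one_ne_zero (congrFun h 0)
  obtain ⟨v, hv, hrel⟩ := exists_isRelPrime_restrictLine hp g.2 hpg hp₀
  have restrictLine_ne_zero : restrictLine v p ≠ 0 := fun h ↦ hp₀ (by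
    rw [← eval_restrictLine (v := v), h, map_zero])
  obtain ⟨l', hl', hmem⟩ := exists_dual_eqOn_homogeneousSubmodule (N := n + n) (l := l) hv hp g.2
    restrictLine_ne_zero hrel (fun q i hq hi ↦ hlp q (by rwa [show i = k by omega] at hq))
    fun q i hq hi ↦ LinearMap.congr_fun hg ⟨q, by rwa [show i = n by omega] at hq⟩
  let π := Ideal.Quotient.mkₐ ℝ (gorensteinIdeal l')
  have hπ {f} (hf : f ∈ ({lineForm v - 1, p, ↑g} : Set (MvPolynomial (Fin 3) ℝ))) : π f = 0 :=
    Ideal.Quotient.eq_zero_iff_mem.2 (hmem hf)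
  have π_lineForm : π (lineForm v) = 1 := by
    rw [← sub_eq_zero, ← map_one π, ← map_sub, hπ (by simp)]
  have π_p : π p = 0 := hπ (by simp)
  have : Nontrivial (MvPolynomial (Fin 3) ℝ ⧸ gorensteinIdeal l') := by
    refine nontrivial_quotient_gorensteinIdeal fun h ↦ hl_ne (catalecticant_eq_zero_iff.2 ?_)
    intro f hf
    rw [LinearMap.mem_ker, ← hl' hf, h, LinearMap.zero_apply]
  have := isEmpty_algHom_of_forall_eval_ne_zero (by simp [lineForm]) π_lineForm π_p hpos
  obtain ⟨_, hlt⟩ := finite_and_finrank_lt_of_isRelPrime_restrictLine hv π_lineForm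
    (Ideal.Quotient.mkₐ_surjective _ _) hp g.2 π_p (hπ (by simp)) restrictLine_ne_zero hrel
  refine hlt.not_ge (two_mul_finrank_le_of_sq_nonneg
    (fun _ ↦ eq_zero_of_gorensteinDual_mul_eq_zero) ?_)
  rintro _ ⟨f, hf, rfl⟩
  refine (hl.nonneg ⟨f, hf⟩).trans_eq ?_
  rw [catalecticant_apply, ← hl' (hf.mul hf), ← gorensteinDual_mk, pow_two, map_mul]
  rfl

end Dehomogenization

section Extremal

open Module

variable {σ : Type*} {n : ℕ}

theorem exists_isPosSemidef_catalecticant_forall_ker_le_eqOn_smul [Finite σ]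
    {P : Submodule ℝ (Dual ℝ (MvPolynomial σ ℝ))} {l₀ : Dual ℝ (MvPolynomial σ ℝ)} (hl₀P : l₀ ∈ P)
    (hl₀ : (catalecticant n l₀).IsPosSemidef) (hl₀_ne : catalecticant n l₀ ≠ 0) :
    ∃ l ∈ P, (catalecticant n l).IsPosSemidef ∧ catalecticant n l ≠ 0 ∧
      ∀ l' ∈ P, LinearMap.ker (catalecticant n l) ≤ LinearMap.ker (catalecticant n l') →
        ∃ c : ℝ, Set.EqOn l' (c • l) (homogeneousSubmodule σ ℝ (n + n)) := by
  obtain ⟨_, ⟨l, hlP, rfl⟩, hl, hl_ne, hext⟩ := exists_isPosSemidef_forall_ker_le_eq_smul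
    (P := P.map (catalecticant n)) (by rintro _ ⟨l, -, rfl⟩; exact isSymm_catalecticant)
    ⟨l₀, hl₀P, rfl⟩ hl₀ hl₀_ne
  refine ⟨l, hlP, hl, hl_ne, fun l' hl' hker ↦ ?_⟩
  obtain ⟨c, hc⟩ := hext _ ⟨l', hl', rfl⟩ hker
  have catalecticant_sub : catalecticant n (l' - c • l) = 0 := by
    rw [map_sub, map_smul, hc]
    exact sub_self (c • catalecticant n l)
  exact ⟨c, fun f hf ↦ sub_eq_zero.1 (catalecticant_eq_zero_iff.1 catalecticant_sub hf)⟩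

theorem exists_mem_ker_catalecticant_not_dvd [Finite σ] [Nontrivial σ] {k m : ℕ} (hn : n ≠ 0)
    {p u : MvPolynomial σ ℝ} {l : Dual ℝ (MvPolynomial σ ℝ)} (hp : p.IsHomogeneous m)
    (hpos : ∀ x : σ → ℝ, x ≠ 0 → eval x p ≠ 0) (hu : ¬IsUnit u) (hup : u ∣ p)
    (hext : ∀ l' ∈ ((homogeneousSubmodule σ ℝ k).map (LinearMap.mulLeft ℝ p)).dualAnnihilator,
      LinearMap.ker (catalecticant n l) ≤ LinearMap.ker (catalecticant n l') →
        ∃ c : ℝ, Set.EqOn l' (c • l) (homogeneousSubmodule σ ℝ (n + n))) :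
    ∃ w ∈ (LinearMap.ker (catalecticant n l)).map (homogeneousSubmodule σ ℝ n).subtype,
      ¬u ∣ w := by
  by_contra! hdvd
  obtain ⟨z, hz, huz⟩ := exists_ne_zero_aeval_eq_zero_of_not_isUnit ℂ hu
  have aeval_mul_eq_zero {f} (hf : u ∣ f) (h : MvPolynomial σ ℝ) : aeval z (f * h) = 0 := by
    obtain ⟨g, rfl⟩ := hf
    rw [map_mul, map_mul, huz, zero_mul, zero_mul]
  have exists_eqOn (φ : ℂ →ₗ[ℝ] ℝ) : ∃ c : ℝ,
      Set.EqOn (φ ∘ₗ (aeval z).toLinearMap) (c • l) (homogeneousSubmodule σ ℝ (n + n)) := by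
    refine hext _ ((Submodule.mem_dualAnnihilator _).2 ?_) fun w hw ↦ ?_
    · rintro _ ⟨q, -, rfl⟩
      exact (congrArg φ (aeval_mul_eq_zero hup q)).trans (map_zero φ)
    · refine LinearMap.mem_ker.2 (LinearMap.ext fun f ↦ ?_)
      exact (congrArg φ (aeval_mul_eq_zero (hdvd w ⟨w, hw, rfl⟩) f)).trans (map_zero φ)
  obtain ⟨a, ha⟩ := exists_eqOn Complex.reLm
  obtain ⟨b, hb⟩ := exists_eqOn Complex.imLm
  obtain ⟨N, hN⟩ := Nat.exists_eq_succ_of_ne_zero (show n + n ≠ 0 by omega)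
  rw [hN] at ha hb
  refine aeval_ne_zero_of_aeval_eq_smul (N := N) (l := l) (c := ⟨a, b⟩) hp hpos hz
    (fun f hf ↦ Complex.ext ?_ ?_) (by simpa using aeval_mul_eq_zero hup 1)
  · simpa using ha hf
  · simpa using hb hf

end Extremal

section Ternary

open Module

theorem exists_isHomogeneous_apply_mul_ne_zero {k n : ℕ} (hk : k + 2 = n)
    {p : MvPolynomial (Fin 3) ℝ} {l : Dual ℝ (MvPolynomial (Fin 3) ℝ)}
    (hp : p.IsHomogeneous (n + 2)) (hpos : ∀ x : Fin 3 → ℝ, x ≠ 0 → eval x p ≠ 0)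
    (hl : (catalecticant n l).IsPosSemidef) (hl_ne : catalecticant n l ≠ 0) :
    ∃ q : MvPolynomial (Fin 3) ℝ, q.IsHomogeneous k ∧ l (p * q) ≠ 0 := by
  by_contra! hlp
  let P := ((homogeneousSubmodule (Fin 3) ℝ k).map (LinearMap.mulLeft ℝ p)).dualAnnihilator
  have hlP : l ∈ P := (Submodule.mem_dualAnnihilator _).2 (by rintro _ ⟨q, hq, rfl⟩; exact hlp q hq)
  obtain ⟨l, hlP, hl, hl_ne, hext⟩ :=
    exists_isPosSemidef_catalecticant_forall_ker_le_eqOn_smul hlP hl hl_ne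
  have hp_ne : p ≠ 0 := fun h ↦ hpos 1 one_ne_zero (by rw [h, map_zero])
  obtain ⟨_, ⟨g, hg, rfl⟩, hpg⟩ := exists_isRelPrime_of_forall_prime_exists_not_dvd _ hp_ne
    fun u hu hup ↦ exists_mem_ker_catalecticant_not_dvd (by omega) hp hpos hu.not_isUnit hup hext
  exact not_isRelPrime_of_mem_ker_catalecticant hk hp hpos hl hl_ne
    (fun q hq ↦ (Submodule.mem_dualAnnihilator _).1 hlP _ ⟨q, hq, rfl⟩) hg hpg

end Ternary

/-- a positive Gorenstein ideal in `ℝ[x₁,x₂,x₃]` with socle `ℓ` of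
degree `4d` contains no strictly positive form of degree `2d + 2`. -/
theorem stmt_9 (d : ℕ) (hd : 1 ≤ d) (l : MvPolynomial (Fin 3) ℝ →ₗ[ℝ] ℝ)
    (hne : ∃ f : MvPolynomial (Fin 3) ℝ, f.IsHomogeneous (4 * d) ∧ l f ≠ 0)
    (hpsd : ∀ f : MvPolynomial (Fin 3) ℝ, f.IsHomogeneous (2 * d) → 0 ≤ l (f ^ 2))
    (p : MvPolynomial (Fin 3) ℝ) (hp : p.IsHomogeneous (2 * d + 2))
    (hpos : ∀ x : Fin 3 → ℝ, x ≠ 0 → 0 < eval x p) :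
    ∃ q : MvPolynomial (Fin 3) ℝ, q.IsHomogeneous (2 * d - 2) ∧ l (p * q) ≠ 0 := by
  have isPosSemidef : (catalecticant (2 * d) l).IsPosSemidef :=
    { isSymm_catalecticant with
      nonneg f := (hpsd f f.2).trans_eq (congrArg l (pow_two (f : MvPolynomial (Fin 3) ℝ))) }
  have ne_zero : catalecticant (2 * d) l ≠ 0 := by
    obtain ⟨f, hf, hlf⟩ := hne
    rw [show 4 * d = 2 * d + 2 * d by ring] at hf
    exact fun h ↦ hlf (catalecticant_eq_zero_iff.1 h hf)
  exact exists_isHomogeneous_apply_mul_ne_zero (Nat.sub_add_cancel (by omega)) hp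
    (fun x hx ↦ (hpos x hx).ne') isPosSemidef ne_zero
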